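/- For every regular ω-language F ⊆ X^ω, the value μ₌(F) of the equidistribution (uniform product) measure on F is a rational number. -/

import Mathlib

open Set MeasureTheory Computability

namespace AutoBaire

/-- The Cantor topology on the space of ω-words over `X`:
the product of the discrete topology on `X`. -/
def cantorTop (X : Type) : TopologicalSpace (ℕ → X) :=
  @Pi.topologicalSpace ℕ (fun _ => X) (fun _ => ⊥)

/-- The Borel σ-algebra of the Cantor space. -/
def cantorBorel (X : Type) : MeasurableSpace (ℕ → X) :=
  @borel (ℕ → X) (cantorTop X)

variable {X : Type}

/-- Concatenation `w·ξ` of a finite word with an ω-word. -/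
def wcat (w : List X) (ξ : ℕ → X) : ℕ → X :=
  Stream'.appendStream' w ξ

/-- The ball (cylinder) `w·X^ω`. -/
def cyl (w : List X) : Set (ℕ → X) := {ξ | ∃ η : ℕ → X, ξ = wcat w η}

/-- The ω-language `W·A` for a language `W` and an ω-language `A`. -/
def catOmega (W : Language X) (A : Set (ℕ → X)) : Set (ℕ → X) :=
  {ξ | ∃ w ∈ W, ∃ η ∈ A, ξ = wcat w η}

/-- `V^ω`: the set of ω-words that are infinite concatenations
`v₁·v₂·⋯` of non-empty words `vᵢ ∈ V`. -/
def omegaPow (V : Language X) : Set (ℕ → X) :=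
  {ξ | ∃ f : ℕ → List X, (∀ i, f i ∈ V ∧ f i ≠ []) ∧
    ∀ k, ξ ∈ cyl (((List.range k).map f).flatten)}

/-- Regular languages: those obtained from finite languages via the operations
union, concatenation and star. -/
inductive IsRegLang : Language X → Prop
  | finite (W : Language X) : (W : Set (List X)).Finite → IsRegLang W
  | union (W V : Language X) : IsRegLang W → IsRegLang V → IsRegLang (W + V)
  | concat (W V : Language X) : IsRegLang W → IsRegLang V → IsRegLang (W * V)
  | star (W : Language X) : IsRegLang W → IsRegLang (W∗)

/-- Regular ω-languages: finite unions `⋃ᵢ Wᵢ·Vᵢ^ω` with `Wᵢ, Vᵢ` regular. -/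
def IsRegOmega (F : Set (ℕ → X)) : Prop :=
  ∃ (n : ℕ) (W V : Fin n → Language X),
    (∀ i, IsRegLang (W i) ∧ IsRegLang (V i)) ∧
    F = ⋃ i, catOmega (W i) (omegaPow (V i))

/-- `X*·w·X^ω`: the set of ω-words containing `w` as an infix. -/
def infixOcc (w : List X) : Set (ℕ → X) :=
  {ξ | ∃ u : List X, ξ ∈ cyl (u ++ w)}

/-- An ω-word is disjunctive if every finite word occurs in it as an infix. -/
def Disjunctive (ξ : ℕ → X) : Prop := ∀ w : List X, ξ ∈ infixOcc w

/-- Ultimately periodic ω-words: `ξ = w·v·v·v·⋯` with `v ≠ e`. -/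
def UltPeriodic (ξ : ℕ → X) : Prop :=
  ∃ (w v : List X) (h : v ≠ []), ξ = wcat w (Stream'.cycle v h)

/-- The Automatic Baire property: `F Δ E ⊆ F'` for some regular open
ω-language `E` and some regular ω-language `F'` of first Baire category. -/
def HasABP (F : Set (ℕ → X)) : Prop :=
  ∃ E F' : Set (ℕ → X),
    IsRegOmega E ∧ @IsOpen _ (cantorTop X) E ∧
    IsRegOmega F' ∧ @IsMeagre _ (cantorTop X) F' ∧
    symmDiff F E ⊆ F'

/-- The measure is finite and non-null: `0 < μ(X^ω) < ∞`. -/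
def FiniteNonNull (μ : @MeasureTheory.Measure (ℕ → X) (cantorBorel X)) : Prop :=
  0 < μ Set.univ ∧ μ Set.univ < ⊤

/-- `supp(μ) = X^ω`: every non-empty open set has positive measure. -/
def FullSupport (μ : @MeasureTheory.Measure (ℕ → X) (cantorBorel X)) : Prop :=
  ∀ U : Set (ℕ → X), @IsOpen _ (cantorTop X) U → U.Nonempty → 0 < μ U

/-- The balance condition: there is `c > 0` such that for all `w ∈ X*`, `x ∈ X`
either `μ(wx·X^ω) = 0` or `c·μ(w·X^ω) ≤ μ(wx·X^ω)`. -/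
def Balanced (μ : @MeasureTheory.Measure (ℕ → X) (cantorBorel X)) : Prop :=
  ∃ c : ENNReal, 0 < c ∧ ∀ (w : List X) (x : X),
    μ (cyl (w ++ [x])) = 0 ∨ c * μ (cyl w) ≤ μ (cyl (w ++ [x]))

/-! Let `F` be regular. It has only finitely many left quotients `u⁻¹F`, so the function `h u = μ
(u⁻¹F)` has finite range, and it is harmonic for the random walk that appends a random letter to
`u`, whose transition probabilities are rational. Take a quotient of largest measure among those
reachable from `u`. By the density theorem this measure is 0 or 1, since otherwise some further
quotient would be larger; so from every `u` the walk can reach a place where `h` is rational. If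
some value `h u` were irrational, a `ℚ`-linear functional `f : ℝ → ℚ` vanishing on `ℚ` but not at
`h u` would give a nonzero harmonic function `f ∘ h` with finite range and reachable zeros, which
the maximum principle forbids. -/

section Harmonic

open Relation

variable {K V V' σ ι : Type*} [Fintype ι]

/-- `h` is harmonic for the random walk on `σ` that moves from `s` to `step s i` with
probability `p s i`: its value at `s` is the expectation of its value after one move. -/
def IsHarmonic [Semiring K] [AddCommMonoid V] [Module K V] (p : σ → ι → K) (step : σ → ι → σ)
    (h : σ → V) : Prop :=
  ∀ s, h s = ∑ i, p s i • h (step s i)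

/-- `t` is a possible successor of `s` in the random walk given by `p` and `step`; the states
that can be visited from `s` are those related to it by `ReflTransGen (CanMove p step)`. -/
def CanMove [Zero K] (p : σ → ι → K) (step : σ → ι → σ) (s t : σ) : Prop :=
  ∃ i, p s i ≠ 0 ∧ step s i = t

theorem IsHarmonic.map [Semiring K] [AddCommMonoid V] [Module K V] [AddCommMonoid V']
    [Module K V'] {p : σ → ι → K} {step : σ → ι → σ} {h : σ → V} (hh : IsHarmonic p step h)
    (f : V →ₗ[K] V') : IsHarmonic p step (f ∘ h) := fun s => by
  simp only [Function.comp_apply]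
  rw [hh s, map_sum]
  simp only [map_smul]

variable [Field K] [LinearOrder K] [IsStrictOrderedRing K] [AddCommGroup V] [Module K V]
  {p : σ → ι → K} {step : σ → ι → σ}

theorem IsHarmonic.eq_of_canMove_of_forall_le {h : σ → K} (hh : IsHarmonic p step h)
    (hp : ∀ s i, 0 ≤ p s i) (hsum : ∀ s, ∑ i, p s i = 1) {s t : σ} (hmax : ∀ r, h r ≤ h s)
    (hst : CanMove p step s t) : h t = h s := by
  obtain ⟨i, hi, rfl⟩ := hst
  have hdefect : ∑ j, p s j * (h s - h (step s j)) = 0 := by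
    simp only [mul_sub, Finset.sum_sub_distrib, ← Finset.sum_mul, hsum, one_mul]
    exact sub_eq_zero.2 (hh s)
  have hterm := (Finset.sum_eq_zero_iff_of_nonneg fun j _ =>
    mul_nonneg (hp s j) (sub_nonneg.2 (hmax _))).1 hdefect i (Finset.mem_univ i)
  exact (sub_eq_zero.1 ((mul_eq_zero.1 hterm).resolve_left hi)).symm

theorem IsHarmonic.le_of_reaches_le {h : σ → K} (hh : IsHarmonic p step h)
    (hp : ∀ s i, 0 ≤ p s i) (hsum : ∀ s, ∑ i, p s i = 1) (hfin : (range h).Finite) {c : K}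
    (hreach : ∀ s, ∃ t, ReflTransGen (CanMove p step) s t ∧ h t ≤ c) (s : σ) : h s ≤ c := by
  obtain ⟨_, ⟨m, rfl⟩, hm⟩ := Set.exists_max_image _ id hfin ⟨h s, mem_range_self s⟩
  have hmax : ∀ r, h r ≤ h m := fun r => hm _ (mem_range_self r)
  obtain ⟨t, hmt, ht⟩ := hreach m
  have hconst : h t = h m := by
    clear ht
    induction hmt with
    | refl => rfl
    | tail _ hst ih =>
      exact (hh.eq_of_canMove_of_forall_le hp hsum (fun r => (hmax r).trans ih.ge) hst).trans ih
  exact (hmax s).trans (hconst ▸ ht)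

theorem IsHarmonic.eq_zero_of_reaches_eq_zero {h : σ → K} (hh : IsHarmonic p step h)
    (hp : ∀ s i, 0 ≤ p s i) (hsum : ∀ s, ∑ i, p s i = 1) (hfin : (range h).Finite)
    (hreach : ∀ s, ∃ t, ReflTransGen (CanMove p step) s t ∧ h t = 0) (s : σ) : h s = 0 := by
  refine le_antisymm (hh.le_of_reaches_le hp hsum hfin
    (fun r => (hreach r).imp fun _ => .imp_right le_of_eq) s) (neg_nonpos.1 ?_)
  refine (hh.map (-LinearMap.id)).le_of_reaches_le hp hsum ?_
    (fun r => (hreach r).imp fun _ => .imp_right fun ht => (neg_eq_zero.2 ht).le) s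
  rw [range_comp]
  exact hfin.image _

theorem IsHarmonic.mem_submodule_of_reaches_mem {h : σ → V} (hh : IsHarmonic p step h)
    (hp : ∀ s i, 0 ≤ p s i) (hsum : ∀ s, ∑ i, p s i = 1) (hfin : (range h).Finite)
    (W : Submodule K V) (hreach : ∀ s, ∃ t, ReflTransGen (CanMove p step) s t ∧ h t ∈ W)
    (s : σ) : h s ∈ W := by
  by_contra hs
  obtain ⟨f, hfs, hfW⟩ := W.exists_le_ker_of_notMem hs
  refine hfs ((hh.map f).eq_zero_of_reaches_eq_zero hp hsum ?_ (fun r => ?_) s)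
  · rw [range_comp]
    exact hfin.image _
  · obtain ⟨t, hrt, ht⟩ := hreach r
    exact ⟨t, hrt, hfW ht⟩

end Harmonic

section Words

theorem wcat_append (u v : List X) (ξ : ℕ → X) : wcat (u ++ v) ξ = wcat u (wcat v ξ) :=
  Stream'.append_append_stream u v ξ

theorem wcat_injective (w : List X) : Function.Injective (wcat w) :=
  Stream'.append_right_injective w

theorem wcat_apply_of_lt {w : List X} {i : ℕ} (hi : i < w.length) (ξ : ℕ → X) :
    wcat w ξ i = w[i] :=
  Stream'.get_append_left i w ξ hi

theorem wcat_length_add (w : List X) (ξ : ℕ → X) (i : ℕ) : wcat w ξ (w.length + i) = ξ i :=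
  Stream'.get_append_right i w ξ

theorem preimage_wcat_append (u v : List X) (F : Set (ℕ → X)) :
    wcat (u ++ v) ⁻¹' F = wcat v ⁻¹' (wcat u ⁻¹' F) :=
  Set.ext fun ξ => by simp only [mem_preimage, wcat_append]

theorem range_wcat (w : List X) : range (wcat w) = cyl w :=
  Set.ext fun _ => exists_congr fun _ => eq_comm

theorem cyl_nil : cyl ([] : List X) = univ :=
  eq_univ_of_forall fun ξ => ⟨ξ, rfl⟩

theorem image_wcat_cyl (w v : List X) : wcat w '' cyl v = cyl (w ++ v) := by
  simp only [← range_wcat, ← range_comp]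
  exact congrArg range (funext fun ξ => (wcat_append w v ξ).symm)

theorem wcat_mem_cyl_append {w v : List X} {ξ : ℕ → X} :
    wcat w ξ ∈ cyl (w ++ v) ↔ ξ ∈ cyl v := by
  rw [← image_wcat_cyl, (wcat_injective w).mem_set_image]

theorem cyl_subset_cyl_of_prefix {u v : List X} (h : u <+: v) : cyl v ⊆ cyl u := by
  obtain ⟨t, rfl⟩ := h
  rw [← image_wcat_cyl, ← range_wcat u]
  exact image_subset_range _ _

/-- The prefix of length `n` of an ω-word. -/
def initialWord (n : ℕ) (ξ : ℕ → X) : List X := Stream'.take n ξ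

theorem length_initialWord (n : ℕ) (ξ : ℕ → X) : (initialWord n ξ).length = n :=
  Stream'.length_take n ξ

theorem getElem_initialWord {n i : ℕ} {ξ : ℕ → X} (hi : i < (initialWord n ξ).length) :
    (initialWord n ξ)[i] = ξ i :=
  Stream'.take_get _ _ _ hi

theorem mem_cyl_iff_initialWord_eq {w : List X} {ξ : ℕ → X} :
    ξ ∈ cyl w ↔ initialWord w.length ξ = w := by
  constructor
  · rintro ⟨η, rfl⟩
    exact (Stream'.take_append_of_le_length w.length w η le_rfl).trans List.take_length
  · intro h
    refine ⟨Stream'.drop w.length ξ, ?_⟩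
    have hsplit := (Stream'.append_take_drop w.length ξ).symm
    rwa [show Stream'.take w.length ξ = w from h] at hsplit

theorem mem_cyl_initialWord (n : ℕ) (ξ : ℕ → X) : ξ ∈ cyl (initialWord n ξ) := by
  rw [mem_cyl_iff_initialWord_eq, length_initialWord]

theorem prefix_of_mem_cyl {u v : List X} {ξ : ℕ → X} (hu : ξ ∈ cyl u) (hv : ξ ∈ cyl v)
    (h : u.length ≤ v.length) : u <+: v := by
  rw [← mem_cyl_iff_initialWord_eq.1 hu, ← mem_cyl_iff_initialWord_eq.1 hv]
  exact Stream'.take_prefix_take_left _ _ ξ h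

theorem cyl_initialWord (n : ℕ) (ξ : ℕ → X) : cyl (initialWord n ξ) = PiNat.cylinder ξ n := by
  ext η
  rw [mem_cyl_iff_initialWord_eq, length_initialWord, PiNat.mem_cylinder_iff, List.ext_getElem_iff]
  simp only [length_initialWord, getElem_initialWord, true_and]
  exact ⟨fun h i hi => h i hi hi, fun h i hi _ => h i hi⟩

end Words

section LeftQuotients

variable {α : Type*} {W V : Language α}

theorem append_mem_kstar {u v : List α} (hu : u ∈ W∗) (hv : v ∈ W∗) : u ++ v ∈ W∗ :=
  kstar_mul_kstar W ▸ Language.append_mem_mul hu hv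

theorem mem_kstar_of_mem {u : List α} (hu : u ∈ W) : u ∈ W∗ :=
  (le_kstar : W ≤ W∗) hu

theorem isRegular_of_finite (hW : (W : Set (List α)).Finite) : W.IsRegular := by
  have htails : (⋃ w ∈ (W : Set (List α)), {y | y ∈ w.tails}).Finite :=
    hW.biUnion fun w _ => w.tails.finite_toSet
  refine .of_finite_range_leftQuotient (htails.finite_subsets.subset ?_)
  rintro _ ⟨u, rfl⟩ y hy
  exact mem_iUnion₂.2 ⟨u ++ y, hy, (List.mem_tails _ _).2 (List.suffix_append u y)⟩

theorem exists_leftQuotient_mul_eq (W V : Language α) (u : List α) :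
    ∃ S ⊆ range V.leftQuotient, (W * V).leftQuotient u = W.leftQuotient u * V + sSup S := by
  refine ⟨{B | ∃ w v, w ∈ W ∧ w ++ v = u ∧ V.leftQuotient v = B}, ?_, ?_⟩
  · rintro _ ⟨_, v, _, _, rfl⟩
    exact mem_range_self v
  ext y
  constructor
  · rintro ⟨a, ha, b, hb, hab⟩
    rcases List.append_eq_append_iff.1 hab with ⟨c, rfl, rfl⟩ | ⟨c, rfl, rfl⟩
    · exact .inr ⟨_, ⟨a, c, ha, rfl, rfl⟩, hb⟩
    · exact .inl ⟨c, ha, b, hb, rfl⟩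
  · rintro (⟨a, ha, b, hb, rfl⟩ | ⟨_, ⟨w, v, hw, rfl, rfl⟩, hy⟩)
    · exact ⟨u ++ a, ha, b, hb, List.append_assoc u a b⟩
    · exact ⟨w, hw, v ++ y, hy, (List.append_assoc w v y).symm⟩

theorem isRegular_mul (hW : W.IsRegular) (hV : V.IsRegular) : (W * V).IsRegular := by
  refine .of_finite_range_leftQuotient ((hW.finite_range_leftQuotient.image2
    (fun A S => A * V + sSup S) hV.finite_range_leftQuotient.finite_subsets).subset ?_)
  rintro _ ⟨u, rfl⟩
  obtain ⟨S, hS, hu⟩ := exists_leftQuotient_mul_eq W V u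
  exact ⟨_, mem_range_self u, S, hS, hu.symm⟩

theorem exists_leftQuotient_kstar_eq (W : Language α) (u : List α) :
    ∃ S ⊆ insert 1 (range W.leftQuotient), (W∗).leftQuotient u = sSup S * W∗ := by
  refine ⟨{B | (u ∈ W∗ ∧ B = 1) ∨ ∃ w v, w ∈ W∗ ∧ w ++ v = u ∧ W.leftQuotient v = B}, ?_, ?_⟩
  · rintro _ (⟨_, rfl⟩ | ⟨_, v, _, _, rfl⟩)
    exacts [mem_insert _ _, mem_insert_of_mem _ (mem_range_self v)]
  ext y
  constructor
  · rintro ⟨L, hL, hLW⟩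
    rcases List.flatten_eq_append_iff.1 hL.symm with
      ⟨as, bs, rfl, rfl, rfl⟩ | ⟨as, b, c, cs, ds, rfl, rfl, rfl⟩
    · obtain ⟨has, hbs⟩ := List.forall_mem_append.1 hLW
      exact ⟨[], ⟨(1 : Language α), .inl ⟨Language.join_mem_kstar has, rfl⟩, rfl⟩, bs.flatten,
        Language.join_mem_kstar hbs, rfl⟩
    · obtain ⟨has, hrest⟩ := List.forall_mem_append.1 hLW
      obtain ⟨hmid, hds⟩ := List.forall_mem_cons.1 hrest
      exact ⟨c :: cs, ⟨W.leftQuotient b, .inr ⟨as.flatten, b, Language.join_mem_kstar has, rfl,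
        rfl⟩, hmid⟩, ds.flatten, Language.join_mem_kstar hds, rfl⟩
  · rintro ⟨a, ⟨_, ⟨hu, rfl⟩ | ⟨w, v, hw, rfl, rfl⟩, ha⟩, b, hb, rfl⟩
    · obtain rfl := ha
      exact append_mem_kstar hu hb
    · have := append_mem_kstar hw (append_mem_kstar (mem_kstar_of_mem ha) hb)
      simpa [Language.mem_leftQuotient] using this

theorem isRegular_kstar (hW : W.IsRegular) : (W∗).IsRegular := by
  refine .of_finite_range_leftQuotient ((((hW.finite_range_leftQuotient.insert
    1).finite_subsets).image fun S => sSup S * W∗).subset ?_)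
  rintro _ ⟨u, rfl⟩
  obtain ⟨S, hS, hu⟩ := exists_leftQuotient_kstar_eq W u
  exact ⟨S, hS, hu.symm⟩

theorem IsRegLang.isRegular {W : Language X} (h : IsRegLang W) : W.IsRegular := by
  induction h with
  | finite W hW => exact isRegular_of_finite hW
  | union W V _ _ hW hV => exact hW.add hV
  | concat W V _ _ hW hV => exact isRegular_mul hW hV
  | star W _ hW => exact isRegular_kstar hW

end LeftQuotients

section FiniteState

/-- Finite-state ω-languages: those with finitely many left quotients
`u⁻¹F = {ξ | u·ξ ∈ F}`. Such an `F` need not be measurable. -/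
def IsFiniteState (F : Set (ℕ → X)) : Prop := (range fun u : List X => wcat u ⁻¹' F).Finite

theorem mem_omegaPow_iff {V : Language X} {ξ : ℕ → X} :
    ξ ∈ omegaPow V ↔ ∃ v ∈ V, v ≠ [] ∧ ∃ η ∈ omegaPow V, ξ = wcat v η := by
  have flatten_succ (f : ℕ → List X) (k : ℕ) : ((List.range (k + 1)).map f).flatten =
      f 0 ++ ((List.range k).map fun i => f (i + 1)).flatten := by
    rw [List.range_succ_eq_map, List.map_cons, List.flatten_cons, List.map_map]
    rfl
  constructor
  · rintro ⟨f, hf, hξ⟩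
    obtain ⟨η, rfl⟩ : ξ ∈ cyl (f 0) := by simpa using hξ 1
    refine ⟨f 0, (hf 0).1, (hf 0).2, η, ⟨fun i => f (i + 1), fun i => hf (i + 1), fun k => ?_⟩, rfl⟩
    rw [← wcat_mem_cyl_append, ← flatten_succ]
    exact hξ (k + 1)
  · rintro ⟨v, hv, hne, η, ⟨f, hf, hη⟩, rfl⟩
    refine ⟨fun | 0 => v | i + 1 => f i, fun | 0 => ⟨hv, hne⟩ | i + 1 => hf i,
      fun | 0 => ?_ | k + 1 => ?_⟩
    · exact cyl_nil ▸ mem_univ _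
    · rw [flatten_succ, wcat_mem_cyl_append]
      exact hη k

theorem wcat_mem_omegaPow {V : Language X} {v : List X} (hv : v ∈ V∗) {η : ℕ → X}
    (hη : η ∈ omegaPow V) : wcat v η ∈ omegaPow V := by
  obtain ⟨L, rfl, hL⟩ := Language.mem_kstar_iff_exists_nonempty.1 hv
  clear hv
  induction L with
  | nil => exact hη
  | cons a L ih =>
    obtain ⟨ha, hL⟩ := List.forall_mem_cons.1 hL
    rw [List.flatten_cons, wcat_append]
    exact mem_omegaPow_iff.2 ⟨a, ha.1, ha.2, _, ih hL, rfl⟩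

theorem exists_eq_wcat_of_mem_omegaPow {V : Language X} {ξ : ℕ → X} (hξ : ξ ∈ omegaPow V)
    (n : ℕ) : ∃ v ∈ V∗, n ≤ v.length ∧ ∃ η ∈ omegaPow V, ξ = wcat v η := by
  induction n with
  | zero => exact ⟨[], Language.nil_mem_kstar V, le_rfl, ξ, hξ, rfl⟩
  | succ n ih =>
    obtain ⟨v, hv, hn, η, hη, rfl⟩ := ih
    obtain ⟨a, ha, hne, ζ, hζ, rfl⟩ := mem_omegaPow_iff.1 hη
    refine ⟨v ++ a, append_mem_kstar hv (mem_kstar_of_mem ha), ?_, ζ, hζ, (wcat_append v a ζ).symm⟩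
    have := List.length_pos_of_ne_nil hne
    rw [List.length_append]
    lia

theorem preimage_wcat_catOmega_omegaPow (W V : Language X) (u : List X) :
    wcat u ⁻¹' catOmega W (omegaPow V) =
      catOmega ((W * V∗).leftQuotient u) (omegaPow V) := by
  ext ξ
  constructor
  · rintro ⟨w, hw, η, hη, h⟩
    obtain ⟨v, hv, hlen, ζ, hζ, rfl⟩ := exists_eq_wcat_of_mem_omegaPow hη u.length
    rw [← wcat_append] at h
    obtain ⟨t, ht⟩ : u <+: w ++ v := prefix_of_mem_cyl ⟨ξ, rfl⟩ ⟨ζ, h⟩ (by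
      rw [List.length_append]
      lia)
    rw [← ht, wcat_append] at h
    exact ⟨t, ⟨w, hw, v, hv, ht.symm⟩, ζ, hζ, wcat_injective u h⟩
  · rintro ⟨t, ⟨w, hw, v, hv, hwv⟩, ζ, hζ, rfl⟩
    refine ⟨w, hw, wcat v ζ, wcat_mem_omegaPow hv hζ, ?_⟩
    rw [← wcat_append, ← wcat_append]
    exact congrArg (wcat · ζ) hwv.symm

theorem IsFiniteState.iUnion {ι : Type*} [Finite ι] {F : ι → Set (ℕ → X)}
    (hF : ∀ i, IsFiniteState (F i)) : IsFiniteState (⋃ i, F i) := by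
  refine ((Set.Finite.pi' hF).image fun G => ⋃ i, G i).subset ?_
  rintro _ ⟨u, rfl⟩
  exact ⟨fun i => wcat u ⁻¹' F i, fun i => mem_range_self u, preimage_iUnion.symm⟩

theorem isFiniteState_catOmega_omegaPow {W V : Language X} (hW : W.IsRegular)
    (hV : V.IsRegular) : IsFiniteState (catOmega W (omegaPow V)) := by
  refine ((isRegular_mul hW (isRegular_kstar hV)).finite_range_leftQuotient.image
    fun L => catOmega L (omegaPow V)).subset ?_
  rintro _ ⟨u, rfl⟩
  exact ⟨_, mem_range_self u, (preimage_wcat_catOmega_omegaPow W V u).symm⟩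

theorem IsRegOmega.isFiniteState {F : Set (ℕ → X)} (hF : IsRegOmega F) : IsFiniteState F := by
  obtain ⟨n, W, V, hWV, rfl⟩ := hF
  exact .iUnion fun i => isFiniteState_catOmega_omegaPow (hWV i).1.isRegular (hWV i).2.isRegular

end FiniteState

section Cylinders

open TopologicalSpace

theorem continuous_wcat [TopologicalSpace X] (w : List X) : Continuous (wcat w) := by
  refine continuous_pi fun i => ?_
  by_cases hi : i < w.length
  · simp only [wcat_apply_of_lt hi]
    exact continuous_const
  · obtain ⟨j, rfl⟩ := Nat.exists_eq_add_of_le (not_lt.1 hi)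
    simp only [wcat_length_add]
    exact continuous_apply j

variable [TopologicalSpace X] [DiscreteTopology X]

theorem isOpen_cyl (w : List X) : IsOpen (cyl w) := by
  rcases (cyl w).eq_empty_or_nonempty with h | ⟨ξ, hξ⟩
  · exact h ▸ isOpen_empty
  · rw [← mem_cyl_iff_initialWord_eq.1 hξ, cyl_initialWord]
    exact PiNat.isOpen_cylinder _ ξ _

theorem exists_cyl_initialWord_subset {U : Set (ℕ → X)} (hU : IsOpen U) {ξ : ℕ → X}
    (hξ : ξ ∈ U) : ∃ n, cyl (initialWord n ξ) ⊆ U := by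
  obtain ⟨_, ⟨η, n, rfl⟩, hξη, hsub⟩ :=
    (PiNat.isTopologicalBasis_cylinders fun _ => X).exists_subset_of_mem_open hξ hU
  exact ⟨n, by rwa [cyl_initialWord, PiNat.mem_cylinder_iff_eq.1 hξη]⟩

theorem isTopologicalBasis_range_cyl : IsTopologicalBasis (range (cyl (X := X))) := by
  refine isTopologicalBasis_of_isOpen_of_nhds ?_ fun ξ U hξ hU => ?_
  · rintro _ ⟨w, rfl⟩
    exact isOpen_cyl w
  · obtain ⟨n, hn⟩ := exists_cyl_initialWord_subset hU hξ
    exact ⟨_, mem_range_self _, mem_cyl_initialWord n ξ, hn⟩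

theorem exists_pairwiseDisjoint_biUnion_cyl_eq {U : Set (ℕ → X)} (hU : IsOpen U) :
    ∃ S : Set (List X), S.PairwiseDisjoint cyl ∧ ⋃ w ∈ S, cyl w = U := by
  classical
  refine ⟨{w | cyl w ⊆ U ∧ ∀ v, v <+: w → cyl v ⊆ U → v = w}, fun u hu v hv huv => ?_,
    Subset.antisymm (iUnion₂_subset fun w hw => hw.1) fun ξ hξ => ?_⟩
  · refine disjoint_left.2 fun ξ hξu hξv => huv ?_
    rcases le_total u.length v.length with h | h
    · exact hv.2 u (prefix_of_mem_cyl hξu hξv h) hu.1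
    · exact (hu.2 v (prefix_of_mem_cyl hξv hξu h) hv.1).symm
  · have hex := exists_cyl_initialWord_subset hU hξ
    refine mem_biUnion ⟨Nat.find_spec hex, fun v hv hvU => ?_⟩
      (mem_cyl_initialWord (Nat.find hex) ξ)
    have hξv : ξ ∈ cyl v := cyl_subset_cyl_of_prefix hv (mem_cyl_initialWord _ ξ)
    refine hv.eq_of_length_le ?_
    rw [length_initialWord]
    exact Nat.find_min' hex (by rwa [mem_cyl_iff_initialWord_eq.1 hξv])

theorem isOpenEmbedding_wcat (w : List X) : Topology.IsOpenEmbedding (wcat w) := by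
  refine .of_continuous_injective_isOpenMap (continuous_wcat w) (wcat_injective w)
    (isTopologicalBasis_range_cyl.isOpenMap_iff.2 ?_)
  rintro _ ⟨v, rfl⟩
  exact image_wcat_cyl w v ▸ isOpen_cyl (w ++ v)

end Cylinders

section Measure

open scoped ENNReal NNReal

/-- The Bernoulli measure with weights `p`: the letters of a random ω-word are independent, and
each of them is `x` with probability `p x`. It is determined by its values on cylinders. -/
def IsBernoulli {_ : MeasurableSpace (ℕ → X)} (p : X → ℝ≥0∞) (μ : Measure (ℕ → X)) : Prop :=
  ∀ w : List X, μ (cyl w) = (w.map p).prod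

theorem IsBernoulli.isProbabilityMeasure {_ : MeasurableSpace (ℕ → X)} {p : X → ℝ≥0∞}
    {μ : Measure (ℕ → X)} (hμ : IsBernoulli p μ) : IsProbabilityMeasure μ :=
  ⟨by simpa [cyl_nil] using hμ []⟩

variable [TopologicalSpace X] [DiscreteTopology X] [Countable X] [MeasurableSpace (ℕ → X)]
  [BorelSpace (ℕ → X)] {μ ν : Measure (ℕ → X)}

theorem le_of_forall_measure_cyl_le [μ.OuterRegular] (h : ∀ w, ν (cyl w) ≤ μ (cyl w)) :
    ν ≤ μ := by
  have hopen {U : Set (ℕ → X)} (hU : IsOpen U) : ν U ≤ μ U := by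
    obtain ⟨S, hS, rfl⟩ := exists_pairwiseDisjoint_biUnion_cyl_eq hU
    have hmeas : ∀ w ∈ S, MeasurableSet (cyl w) := fun w _ => (isOpen_cyl w).measurableSet
    rw [measure_biUnion S.to_countable hS hmeas, measure_biUnion S.to_countable hS hmeas]
    exact ENNReal.tsum_le_tsum fun w => h w
  refine Measure.le_intro fun A _ _ => ?_
  rw [A.measure_eq_iInf_isOpen μ]
  exact le_iInf₂ fun U hAU => le_iInf fun hU => (measure_mono hAU).trans (hopen hU)

theorem ext_of_measure_cyl [μ.OuterRegular] [ν.OuterRegular] (h : ∀ w, μ (cyl w) = ν (cyl w)) :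
    μ = ν :=
  le_antisymm (le_of_forall_measure_cyl_le fun w => (h w).le)
    (le_of_forall_measure_cyl_le fun w => (h w).ge)

/-- A weak form of the Lebesgue density theorem. -/
theorem exists_mul_measure_cyl_lt [IsFiniteMeasure μ] {A : Set (ℕ → X)} (hA : μ A ≠ 0)
    {d : ℝ≥0∞} (hd : d < 1) : ∃ w, d * μ (cyl w) < μ (A ∩ cyl w) := by
  by_contra! hle
  lift d to ℝ≥0 using hd.ne_top
  have hrestrict : μ.restrict A ≤ d • μ := le_of_forall_measure_cyl_le fun w => by
    rw [Measure.restrict_apply (isOpen_cyl w).measurableSet, inter_comm]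
    exact hle w
  have hself : μ A ≤ d * μ A := by simpa using hrestrict A
  refine hself.not_gt ?_
  simpa using ENNReal.mul_lt_mul_left hA (measure_ne_top μ A) hd

namespace IsBernoulli

variable {p : X → ℝ≥0∞}

theorem measure_image_wcat (hμ : IsBernoulli p μ) (w : List X) (A : Set (ℕ → X)) :
    μ (wcat w '' A) = (w.map p).prod * μ A := by
  have := hμ.isProbabilityMeasure
  have hw : MeasurableEmbedding (wcat w) := (isOpenEmbedding_wcat w).measurableEmbedding
  have hfin : (w.map p).prod ≠ ∞ := hμ w ▸ measure_ne_top μ _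
  have := Measure.OuterRegular.smul μ hfin
  have : IsFiniteMeasure (μ.comap (wcat w)) := ⟨hw.comap_apply μ _ ▸ measure_lt_top μ _⟩
  have hcomap : μ.comap (wcat w) = (w.map p).prod • μ := ext_of_measure_cyl fun v => by
    rw [hw.comap_apply, image_wcat_cyl, hμ, List.map_append, List.prod_append, Measure.smul_apply,
      hμ, smul_eq_mul]
  rw [← hw.comap_apply, hcomap, Measure.smul_apply, smul_eq_mul]

theorem measure_inter_cyl (hμ : IsBernoulli p μ) (w : List X) (A : Set (ℕ → X)) :
    μ (A ∩ cyl w) = (w.map p).prod * μ (wcat w ⁻¹' A) := by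
  rw [← hμ.measure_image_wcat, image_preimage_eq_inter_range, range_wcat]

theorem measure_eq_tsum (hμ : IsBernoulli p μ) (A : Set (ℕ → X)) :
    μ A = ∑' x, p x * μ (wcat [x] ⁻¹' A) := by
  have hcover : ⋃ x : X, cyl [x] = univ :=
    eq_univ_of_forall fun ξ => mem_iUnion.2 ⟨ξ 0, mem_cyl_initialWord 1 ξ⟩
  have hdisj : Pairwise (Function.onFun Disjoint fun x : X => cyl [x]) := fun x y hxy =>
    disjoint_left.2 fun ξ hx hy => hxy (by simpa using prefix_of_mem_cyl hx hy le_rfl)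
  calc μ A = μ.restrict A (⋃ x : X, cyl [x]) := by rw [hcover, Measure.restrict_apply_univ]
    _ = ∑' x, μ.restrict A (cyl [x]) := measure_iUnion hdisj fun x => (isOpen_cyl [x]).measurableSet
    _ = ∑' x, p x * μ (wcat [x] ⁻¹' A) := tsum_congr fun x => by
      rw [Measure.restrict_apply (isOpen_cyl [x]).measurableSet, inter_comm,
        hμ.measure_inter_cyl, List.map_singleton, List.prod_singleton]

theorem exists_lt_measure_preimage_wcat (hμ : IsBernoulli p μ) {A : Set (ℕ → X)} (hA : μ A ≠ 0)
    {d : ℝ≥0∞} (hd : d < 1) :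
    ∃ w : List X, (w.map p).prod ≠ 0 ∧ d < μ (wcat w ⁻¹' A) := by
  have := hμ.isProbabilityMeasure
  obtain ⟨w, hw⟩ := exists_mul_measure_cyl_lt hA hd
  rw [hμ.measure_inter_cyl, hμ, mul_comm] at hw
  exact ⟨w, left_ne_zero_of_mul (pos_of_gt hw).ne', lt_of_mul_lt_mul_left' hw⟩

theorem exists_measure_preimage_wcat_eq_zero_or_one (hμ : IsBernoulli p μ) {F : Set (ℕ → X)}
    (hF : IsFiniteState F) :
    ∃ w : List X, (w.map p).prod ≠ 0 ∧ (μ (wcat w ⁻¹' F) = 0 ∨ μ (wcat w ⁻¹' F) = 1) := by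
  have := hμ.isProbabilityMeasure
  obtain ⟨_, ⟨v, hv, rfl⟩, hmax⟩ := Set.exists_max_image
    ((fun w => wcat w ⁻¹' F) '' {w | (w.map p).prod ≠ 0}) μ (hF.subset (image_subset_range _ _))
    ⟨_, [], by simp, rfl⟩
  refine ⟨v, hv, or_iff_not_imp_left.2 fun h0 => prob_le_one.antisymm (not_lt.1 fun hlt => ?_)⟩
  obtain ⟨w, hw, hvw⟩ := hμ.exists_lt_measure_preimage_wcat h0 hlt
  rw [← preimage_wcat_append] at hvw
  refine (hmax _ ⟨v ++ w, ?_, rfl⟩).not_gt hvw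
  rw [mem_ofPred_eq, List.map_append, List.prod_append]
  exact mul_ne_zero hv hw

end IsBernoulli

end Measure

section Rationality

open Relation
open scoped ENNReal

theorem reflTransGen_canMove_append {K : Type*} [MonoidWithZero K] {p : X → K} (u : List X)
    {v : List X} (hv : (v.map p).prod ≠ 0) :
    ReflTransGen (CanMove (fun _ => p) fun w x => w ++ [x]) u (u ++ v) := by
  induction v generalizing u with
  | nil => rw [List.append_nil]
  | cons x v ih =>
    rw [List.map_cons, List.prod_cons] at hv
    rw [List.append_cons]
    exact .head ⟨x, left_ne_zero_of_mul hv, rfl⟩ (ih _ (right_ne_zero_of_mul hv))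

theorem IsFiniteState.preimage_wcat {F : Set (ℕ → X)} (hF : IsFiniteState F) (u : List X) :
    IsFiniteState (wcat u ⁻¹' F) := by
  refine hF.subset ?_
  rintro _ ⟨v, rfl⟩
  exact ⟨u ++ v, preimage_wcat_append u v F⟩

namespace IsBernoulli

variable [TopologicalSpace X] [DiscreteTopology X] [MeasurableSpace (ℕ → X)] [BorelSpace (ℕ → X)]
  {μ : Measure (ℕ → X)} {p : X → ℚ≥0}

theorem measureReal_eq_sum [Fintype X] (hμ : IsBernoulli (fun x => (p x : ℝ≥0∞)) μ)
    (A : Set (ℕ → X)) : μ.real A = ∑ x, (p x : ℝ) * μ.real (wcat [x] ⁻¹' A) := by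
  have := hμ.isProbabilityMeasure
  have hfin : ∀ x ∈ Finset.univ, (p x : ℝ≥0∞) * μ (wcat [x] ⁻¹' A) ≠ ∞ := fun x _ =>
    ENNReal.mul_ne_top ENNReal.coe_ne_top (measure_ne_top μ _)
  rw [measureReal_def, hμ.measure_eq_tsum, tsum_fintype, ENNReal.toReal_sum hfin]
  simp only [ENNReal.toReal_mul, measureReal_def]
  rfl

theorem sum_eq_one [Fintype X] (hμ : IsBernoulli (fun x => (p x : ℝ≥0∞)) μ) :
    ∑ x, p x = 1 := by
  have := hμ.isProbabilityMeasure
  have hsum := hμ.measureReal_eq_sum univ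
  simp only [preimage_univ, probReal_univ, mul_one] at hsum
  exact_mod_cast hsum.symm

theorem isHarmonic_measureReal_preimage_wcat [Fintype X]
    (hμ : IsBernoulli (fun x => (p x : ℝ≥0∞)) μ) (F : Set (ℕ → X)) :
    IsHarmonic (fun _ x => (p x : ℚ)) (fun u x => u ++ [x])
      fun u : List X => μ.real (wcat u ⁻¹' F) := fun u => by
  simp only [hμ.measureReal_eq_sum (wcat u ⁻¹' F), preimage_wcat_append, Rat.smul_def,
    Rat.cast_nnratCast]

theorem exists_measureReal_eq_ratCast [Finite X] (hμ : IsBernoulli (fun x => (p x : ℝ≥0∞)) μ)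
    {F : Set (ℕ → X)} (hF : IsFiniteState F) : ∃ q : ℚ, μ.real F = q := by
  have := Fintype.ofFinite X
  have hsum : ∑ x, (p x : ℚ) = 1 := by exact_mod_cast hμ.sum_eq_one
  suffices hmem : μ.real F ∈ LinearMap.range (Algebra.linearMap ℚ ℝ) from
    hmem.imp fun _ => Eq.symm
  refine (hμ.isHarmonic_measureReal_preimage_wcat F).mem_submodule_of_reaches_mem
    (fun _ x => (p x).cast_nonneg) (fun _ => hsum) ?_ _ (fun u => ?_) []
  · refine (hF.image μ.real).subset ?_
    rintro _ ⟨u, rfl⟩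
    exact mem_image_of_mem _ (mem_range_self u)
  · obtain ⟨w, hw, h01⟩ :=
      hμ.exists_measure_preimage_wcat_eq_zero_or_one (hF.preimage_wcat u)
    refine ⟨u ++ w, reflTransGen_canMove_append u ?_, ?_⟩
    · simpa [← ENNReal.coe_nnratCast] using hw
    · rw [preimage_wcat_append, measureReal_def]
      rcases h01 with h | h <;> rw [h]
      exacts [⟨0, by simp⟩, ⟨1, by simp⟩]

end IsBernoulli

theorem isBernoulli_inv_natCast {_ : MeasurableSpace (ℕ → X)} {μ : Measure (ℕ → X)} {n : ℕ}
    (hn : n ≠ 0) (hμ : ∀ w : List X, μ (cyl w) = (n : ℝ≥0∞)⁻¹ ^ w.length) :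
    IsBernoulli (fun _ => ((n⁻¹ : ℚ≥0) : ℝ≥0∞)) μ := fun w => by
  rw [hμ, List.map_const', List.prod_replicate, ← ENNReal.coe_nnratCast, NNRat.cast_inv,
    NNRat.cast_natCast, ENNReal.coe_inv (Nat.cast_ne_zero.2 hn), ENNReal.coe_natCast]

theorem stmt16_general {X : Type} [Finite X] (p : X → ℚ≥0)
    (μ : @MeasureTheory.Measure (ℕ → X) (cantorBorel X))
    (hμ : IsBernoulli (fun x => (p x : ℝ≥0∞)) μ) (F : Set (ℕ → X))
    (hF : IsFiniteState F) : ∃ q : ℚ, μ F = ENNReal.ofReal (q : ℝ) := by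
  let : TopologicalSpace X := ⊥
  have : DiscreteTopology X := ⟨rfl⟩
  let : MeasurableSpace (ℕ → X) := cantorBorel X
  have : BorelSpace (ℕ → X) := ⟨rfl⟩
  have := hμ.isProbabilityMeasure
  obtain ⟨q, hq⟩ := hμ.exists_measureReal_eq_ratCast hF
  exact ⟨q, by rw [← hq, ofReal_measureReal]⟩

end Rationality

theorem stmt16 {X : Type} [Fintype X] (hX : 2 ≤ Fintype.card X)
    (μ : @MeasureTheory.Measure (ℕ → X) (cantorBorel X))
    (hμ : ∀ w : List X, μ (cyl w) = ((Fintype.card X : ENNReal))⁻¹ ^ w.length)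
    (F : Set (ℕ → X)) (hreg : IsRegOmega F) :
    ∃ q : ℚ, μ F = ENNReal.ofReal (q : ℝ) := by
  exact stmt16_general _ μ (isBernoulli_inv_natCast (by lia) hμ) F hreg.isFiniteState

end AutoBaire
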